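/- arXiv:2110.15523 — 3 statements merged into one kernel-verified Lean document; each statement's English description precedes it below -/
import Mathlib

section
/- Let 3 ≤ K < N and m ≥ 3. Then PW_{2K}(B_N □ C_m) is the orthogonal direct sum of the three subspaces of ℓ²(V × ZMod m): (i) the span of all f ⊗ g with f ∈ PW_{2K−4}(B_N) and g ∈ ℓ²(ZMod m); (ii) the span of all f ⊗ g with f ∈ Λ_{2K−2}(B_N) and g ∈ PW_2(C_m); and (iii) the span of all f ⊗ g with f ∈ Λ_{2K}(B_N) and g constant. -/
open Complex Finset
open scoped Real Classical

noncomputable section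

/-- Vertices of the Boolean cube B_N. -/
abbrev Vtx (N : ℕ) := Fin N → ZMod 2

/-- The inner product on ℓ²: ⟨f,g⟩ = Σ f·conj(g). -/
def ip {α : Type*} [Fintype α] (f g : α → ℂ) : ℂ :=
  ∑ x, f x * (starRingEnd ℂ) (g x)

/-- Cube adjacency: differ in exactly one coordinate. -/
def cubeAdj {N : ℕ} (v w : Vtx N) : Prop :=
  (Finset.univ.filter fun i => v i ≠ w i).card = 1

instance {N : ℕ} (v w : Vtx N) : Decidable (cubeAdj v w) := by
  unfold cubeAdj; infer_instance

/-- Unnormalized Laplacian of the Boolean cube. -/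
def cubeLap (N : ℕ) (f : Vtx N → ℂ) : Vtx N → ℂ :=
  fun v => ∑ w ∈ Finset.univ.filter (fun w => cubeAdj v w), (f v - f w)

/-- Unnormalized Laplacian of the cycle graph C_m:
(L f)(ℓ) = 2 f(ℓ) − f(ℓ+1) − f(ℓ−1). -/
def cycLap (m : ℕ) (f : ZMod m → ℂ) : ZMod m → ℂ :=
  fun ℓ => 2 * f ℓ - f (ℓ + 1) - f (ℓ - 1)

/-- Unnormalized Laplacian of the Cartesian product B_N □ C_m: each vertex
(u,ℓ) has its cube neighbors (w,ℓ) and its cycle neighbors (u,ℓ±1). -/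
def prodLap (N m : ℕ) (F : Vtx N × ZMod m → ℂ) : Vtx N × ZMod m → ℂ :=
  fun x => cubeLap N (fun u => F (u, x.2)) x.1 +
    (2 * F x - F (x.1, x.2 + 1) - F (x.1, x.2 - 1))

/-- Paley–Wiener space of B_N: span of Laplacian eigenvectors with
eigenvalue at most Ω. -/
def PWcube (N : ℕ) (Ω : ℝ) : Submodule ℂ (Vtx N → ℂ) :=
  Submodule.span ℂ {f | ∃ μ : ℝ, μ ≤ Ω ∧ cubeLap N f = fun v => (μ : ℂ) * f v}

/-- Paley–Wiener space of C_m: span of Laplacian eigenvectors with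
eigenvalue at most Ω. -/
def PWcyc (m : ℕ) (Ω : ℝ) : Submodule ℂ (ZMod m → ℂ) :=
  Submodule.span ℂ {g | ∃ μ : ℝ, μ ≤ Ω ∧ cycLap m g = fun ℓ => (μ : ℂ) * g ℓ}

/-- Paley–Wiener space of B_N □ C_m: span of Laplacian eigenvectors with
eigenvalue at most Ω. -/
def PWprod (N m : ℕ) (Ω : ℝ) : Submodule ℂ (Vtx N × ZMod m → ℂ) :=
  Submodule.span ℂ {F | ∃ μ : ℝ, μ ≤ Ω ∧ prodLap N m F = fun x => (μ : ℂ) * F x}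

/-- Truncation Q to the zero B_N-slice. -/
def Qslice (N m : ℕ) (F : Vtx N × ZMod m → ℂ) : Vtx N × ZMod m → ℂ :=
  fun x => if x.2 = 0 then F x else 0

/-- Component (i): span of all f ⊗ g with f ∈ PW_{2K−4}(B_N), g ∈ ℓ²(C_m). -/
def S1 (N K m : ℕ) : Submodule ℂ (Vtx N × ZMod m → ℂ) :=
  Submodule.span ℂ {F | ∃ (f : Vtx N → ℂ) (g : ZMod m → ℂ),
    f ∈ PWcube N (2 * (K : ℝ) - 4) ∧ F = fun x => f x.1 * g x.2}

/-- Component (ii): span of all f ⊗ g with f ∈ Λ_{2K−2}(B_N), g ∈ PW_2(C_m). -/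
def S2 (N K m : ℕ) : Submodule ℂ (Vtx N × ZMod m → ℂ) :=
  Submodule.span ℂ {F | ∃ (f : Vtx N → ℂ) (g : ZMod m → ℂ),
    (cubeLap N f = fun v => ((2 * (K : ℝ) - 2 : ℝ) : ℂ) * f v) ∧
    g ∈ PWcyc m 2 ∧ F = fun x => f x.1 * g x.2}

/-- Component (iii): span of all f ⊗ g with f ∈ Λ_{2K}(B_N), g constant. -/
def S3 (N K m : ℕ) : Submodule ℂ (Vtx N × ZMod m → ℂ) :=
  Submodule.span ℂ {F | ∃ (f : Vtx N → ℂ) (c : ℂ),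
    (cubeLap N f = fun v => ((2 * (K : ℝ) : ℝ) : ℂ) * f v) ∧
    F = fun x => f x.1 * c}

/-!
Each of the three graphs is a Cayley graph of a finite abelian group, so the characters of the group
form an orthogonal basis of Laplacian eigenvectors, and every space in sight is spanned by the
characters it contains. A character of `(ℤ/2)^N × ℤ/m` restricts to characters `χ` and `ψ` of the
two factors, and its eigenvalue is `2j + b`, where `j` counts the coordinates on which `χ` is
nontrivial and `b ∈ [0, 4]` is the eigenvalue of `ψ`. The condition `2j + b ≤ 2K` holds
exactly when `j ≤ K - 2`, or `j = K - 1` and `b ≤ 2`, or `j = K` and `b = 0`, and `b = 0` forces `ψ`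
to be trivial.
-/

section Eigenvectors

variable {R M ι : Type*} [CommRing R] [AddCommGroup M] [Module R M]

theorem repr_map_of_basis_eigenvectors {T : Module.End R M} (b : Module.Basis ι R M) {ν : ι → R}
    (hb : ∀ i, T (b i) = ν i • b i) (x : M) (i : ι) : b.repr (T x) i = ν i * b.repr x i := by
  have h : b.coord i ∘ₗ T = ν i • b.coord i := b.ext fun j => by
    rcases eq_or_ne j i with rfl | hji <;> simp [*]
  exact LinearMap.congr_fun h x

theorem span_eigenvectors_eq_span_image [NoZeroDivisors R] {T : Module.End R M}
    (b : Module.Basis ι R M) {ν : ι → R} (hb : ∀ i, T (b i) = ν i • b i) (S : Set R) :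
    Submodule.span R {x | ∃ μ ∈ S, T x = μ • x} = Submodule.span R (b '' (ν ⁻¹' S)) := by
  apply le_antisymm <;> refine Submodule.span_le.mpr ?_
  · rintro x ⟨μ, hμ, hx⟩
    refine b.mem_span_image.mpr fun i hi => ?_
    have hμi : μ * b.repr x i = ν i * b.repr x i := by
      rw [← repr_map_of_basis_eigenvectors b hb, hx, map_smul, Finsupp.smul_apply, smul_eq_mul]
    rwa [Set.mem_preimage, ← mul_right_cancel₀ (Finsupp.mem_support_iff.mp hi) hμi]
  · rintro _ ⟨i, hi, rfl⟩
    exact Submodule.subset_span ⟨ν i, hi, hb i⟩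

end Eigenvectors

theorem map₂_span_left {R M N P : Type*} [CommSemiring R] [AddCommMonoid M] [AddCommMonoid N]
    [AddCommMonoid P] [Module R M] [Module R N] [Module R P] (f : M →ₗ[R] N →ₗ[R] P) (s : Set M)
    (q : Submodule R N) :
    Submodule.map₂ f (Submodule.span R s) q = Submodule.span R (Set.image2 (f · ·) s q) := by
  rw [← Submodule.map₂_span_span, Submodule.span_eq]

section InnerProduct

variable {α : Type*} [Fintype α]

theorem ip_eq_dotProduct_star (f g : α → ℂ) : ip f g = f ⬝ᵥ star g := rfl

theorem ip_eq_zero_of_mem_span {s t : Set (α → ℂ)} (h : ∀ f ∈ s, ∀ g ∈ t, ip f g = 0)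
    {f g : α → ℂ} (hf : f ∈ Submodule.span ℂ s) (hg : g ∈ Submodule.span ℂ t) : ip f g = 0 := by
  simp only [ip_eq_dotProduct_star] at h ⊢
  induction hf, hg using Submodule.span_induction₂ with
  | mem_mem f g hf hg => exact h f hf g hg
  | zero_left => simp
  | zero_right => simp
  | add_left f f' g _ _ _ hf hf' => simp [hf, hf']
  | add_right f g g' _ _ _ hg hg' => simp [hg, hg']
  | smul_left c f g _ _ hfg => simp [hfg]
  | smul_right c f g _ _ hfg => simp [hfg]

theorem ip_addChar_of_ne [AddCommGroup α] {χ χ' : AddChar α ℂ} (h : χ ≠ χ') :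
    ip χ χ' = 0 :=
  calc ip χ χ' = ∑ x, (χ - χ') x := by
        simp only [ip, AddChar.sub_apply', div_eq_mul_inv, AddChar.inv_apply_eq_conj]
    _ = 0 := AddChar.sum_eq_zero_iff_ne_zero.mpr (sub_ne_zero.mpr h)

end InnerProduct

section CharSpan

variable {G : Type*} [AddCommGroup G]

/-- The space of functions on `G` spanned by a set of characters, that is, the functions whose
Fourier transform is supported in `A`. -/
def charSpan (A : Set (AddChar G ℂ)) : Submodule ℂ (G → ℂ) :=
  Submodule.span ℂ ((⇑) '' A)

theorem charSpan_univ [Finite G] : charSpan (Set.univ : Set (AddChar G ℂ)) = ⊤ := by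
  rw [charSpan, Set.image_univ, ← AddChar.coe_complexBasis, Module.Basis.span_eq]

theorem charSpan_union (A B : Set (AddChar G ℂ)) : charSpan (A ∪ B) = charSpan A ⊔ charSpan B := by
  rw [charSpan, Set.image_union, Submodule.span_union, charSpan, charSpan]

theorem mem_charSpan_one_iff {f : G → ℂ} :
    f ∈ charSpan {(1 : AddChar G ℂ)} ↔ ∃ c, f = fun _ => c := by
  simp [charSpan, Submodule.mem_span_singleton, funext_iff, eq_comm]

theorem ip_eq_zero_of_mem_charSpan [Fintype G] {A B : Set (AddChar G ℂ)} (hAB : Disjoint A B) :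
    ∀ f ∈ charSpan A, ∀ g ∈ charSpan B, ip f g = 0 := by
  refine fun f hf g hg => ip_eq_zero_of_mem_span ?_ hf hg
  rintro _ ⟨χ, hχ, rfl⟩ _ ⟨χ', hχ', rfl⟩
  exact ip_addChar_of_ne (hAB.ne_of_mem hχ hχ')

end CharSpan

section CayleyLaplacian

variable {G H ι κ : Type*} [AddCommGroup G] [AddCommGroup H] [Fintype ι] [Fintype κ]

/-- The Laplacian of the Cayley graph of `G` whose edges join `v` to `v + s i`. The generators are
an indexed family, so that repeated ones give multiple edges. -/
def cayleyLap (s : ι → G) : Module.End ℂ (G → ℂ) :=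
  ∑ i, (1 - LinearMap.funLeft ℂ ℂ (· + s i))

theorem cayleyLap_apply (s : ι → G) (f : G → ℂ) (v : G) :
    cayleyLap s f v = ∑ i, (f v - f (v + s i)) := by
  simp [cayleyLap, LinearMap.funLeft_apply]

theorem cayleyLap_addChar (s : ι → G) (χ : AddChar G ℂ) :
    cayleyLap s χ = (∑ i, (1 - χ (s i))) • ⇑χ := by
  ext v
  simp only [cayleyLap_apply, AddChar.map_add_eq_mul, Pi.smul_apply, smul_eq_mul, sum_mul]
  exact sum_congr rfl fun i _ => by ring

theorem span_cayleyLap_eigenvectors_eq_charSpan [Finite G] {s : ι → G} {ν : AddChar G ℂ → ℝ}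
    (hν : ∀ χ, ∑ i, (1 - χ (s i)) = (ν χ : ℂ)) (S : Set ℝ) :
    Submodule.span ℂ {f | ∃ μ ∈ S, cayleyLap s f = fun v => (μ : ℂ) * f v} =
      charSpan (ν ⁻¹' S) := by
  have h := span_eigenvectors_eq_span_image (AddChar.complexBasis G)
    (T := cayleyLap s) (ν := fun χ => (ν χ : ℂ))
    (fun χ => by rw [AddChar.complexBasis_apply, cayleyLap_addChar, hν]) (Complex.ofReal '' S)
  rw [AddChar.coe_complexBasis, ← Function.comp_def Complex.ofReal ν, Set.preimage_comp,
    Set.preimage_image_eq _ Complex.ofReal_injective] at h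
  rw [charSpan, ← h]
  simp only [Set.exists_mem_image]
  rfl

/-- The generators of the Cartesian product of two Cayley graphs. -/
def prodGenerators (s : ι → G) (t : κ → H) : ι ⊕ κ → G × H :=
  Sum.elim (AddMonoidHom.inl G H ∘ s) (AddMonoidHom.inr G H ∘ t)

theorem cayleyLap_prodGenerators_apply (s : ι → G) (t : κ → H) (F : G × H → ℂ) (x : G × H) :
    cayleyLap (prodGenerators s t) F x =
      cayleyLap s (fun u => F (u, x.2)) x.1 + cayleyLap t (fun ℓ => F (x.1, ℓ)) x.2 := by
  simp only [cayleyLap_apply, Fintype.sum_sum_type, prodGenerators, Sum.elim_inl, Sum.elim_inr,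
    Function.comp_apply, AddMonoidHom.inl_apply, AddMonoidHom.inr_apply, Prod.add_def, add_zero]

end CayleyLaplacian

section ProductCharacters

variable {G H : Type*} [AddCommGroup G] [AddCommGroup H]

/-- The tensor product `f ⊗ g`, as the function `(u, ℓ) ↦ f u * g ℓ` on the product. -/
def tensor {R α β : Type*} [CommSemiring R] : (α → R) →ₗ[R] (β → R) →ₗ[R] (α × β → R) :=
  LinearMap.mk₂ R (fun f g x => f x.1 * g x.2)
    (fun _ _ _ => funext fun _ => add_mul _ _ _)
    (fun _ _ _ => funext fun _ => mul_assoc _ _ _)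
    (fun _ _ _ => funext fun _ => mul_add _ _ _)
    (fun _ _ _ => funext fun _ => mul_left_comm _ _ _)

/-- The restriction of a character of `G × H` to the first factor. -/
def fstChar (θ : AddChar (G × H) ℂ) : AddChar G ℂ :=
  θ.compAddMonoidHom (AddMonoidHom.inl G H)

/-- The restriction of a character of `G × H` to the second factor. -/
def sndChar (θ : AddChar (G × H) ℂ) : AddChar H ℂ :=
  θ.compAddMonoidHom (AddMonoidHom.inr G H)

theorem tensor_fstChar_sndChar (θ : AddChar (G × H) ℂ) : tensor (fstChar θ) (sndChar θ) = θ := by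
  ext x
  simp [tensor, fstChar, sndChar, ← AddChar.map_add_eq_mul]

theorem exists_fstChar_eq_sndChar_eq (χ : AddChar G ℂ) (ψ : AddChar H ℂ) :
    ∃ θ : AddChar (G × H) ℂ, fstChar θ = χ ∧ sndChar θ = ψ := by
  refine ⟨χ.compAddMonoidHom (AddMonoidHom.fst G H) * ψ.compAddMonoidHom (AddMonoidHom.snd G H),
    ?_, ?_⟩ <;> ext <;> simp [fstChar, sndChar]

theorem map₂_tensor_charSpan (A : Set (AddChar G ℂ)) (B : Set (AddChar H ℂ)) :
    Submodule.map₂ tensor (charSpan A) (charSpan B) =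
      charSpan {θ | fstChar θ ∈ A ∧ sndChar θ ∈ B} := by
  rw [charSpan, charSpan, Submodule.map₂_span_span, charSpan]
  congr 1
  ext F
  constructor
  · rintro ⟨_, ⟨χ, hχ, rfl⟩, _, ⟨ψ, hψ, rfl⟩, rfl⟩
    obtain ⟨θ, rfl, rfl⟩ := exists_fstChar_eq_sndChar_eq χ ψ
    exact ⟨θ, ⟨hχ, hψ⟩, (tensor_fstChar_sndChar θ).symm⟩
  · rintro ⟨θ, ⟨hχ, hψ⟩, rfl⟩
    exact ⟨_, ⟨_, hχ, rfl⟩, _, ⟨_, hψ, rfl⟩, tensor_fstChar_sndChar θ⟩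

theorem sum_one_sub_prodGenerators {ι κ : Type*} [Fintype ι] [Fintype κ] (s : ι → G) (t : κ → H)
    (θ : AddChar (G × H) ℂ) :
    ∑ k, (1 - θ (prodGenerators s t k)) =
      ∑ i, (1 - fstChar θ (s i)) + ∑ i, (1 - sndChar θ (t i)) :=
  Fintype.sum_sum_type _

end ProductCharacters

section Cube

variable {N : ℕ}

/-- The generators of the Boolean cube as a Cayley graph: the standard basis of `(ℤ/2)^N`. -/
def cubeGenerators (N : ℕ) (i : Fin N) : Vtx N :=
  Pi.single i 1

theorem cubeAdj_iff_exists_add_cubeGenerators {v w : Vtx N} :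
    cubeAdj v w ↔ ∃ i, v + cubeGenerators N i = w := by
  have flip : ∀ a b : ZMod 2, a ≠ b ↔ a + 1 = b := by decide
  have hsingle (i j : Fin N) :
      (v j ≠ w j ↔ j = i) ↔ v j + cubeGenerators N i j = w j := by
    rcases eq_or_ne j i with rfl | hji
    · simp [cubeGenerators, flip]
    · simp [cubeGenerators, hji]
  simp only [cubeAdj, card_eq_one, Finset.ext_iff, mem_filter_univ, mem_singleton, hsingle,
    funext_iff, Pi.add_apply]

theorem cubeGenerators_injective : Function.Injective (cubeGenerators N) :=
  fun i j hij => by simpa [cubeGenerators, Pi.single_apply] using congrFun hij i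

theorem cubeLap_eq_cayleyLap (f : Vtx N → ℂ) : cubeLap N f = cayleyLap (cubeGenerators N) f := by
  ext v
  have hnbhd : univ.filter (cubeAdj v) = univ.image (v + cubeGenerators N ·) := by
    ext w
    simp [cubeAdj_iff_exists_add_cubeGenerators]
  have hinj : Function.Injective (v + cubeGenerators N ·) :=
    (add_right_injective v).comp cubeGenerators_injective
  rw [cubeLap, hnbhd, sum_image hinj.injOn, cayleyLap_apply]

/-- The weight of a character of `(ℤ/2)^N`: the number of coordinates on which it is nontrivial.
It indexes the eigenspaces of the cube. -/
def charWeight (χ : AddChar (Vtx N) ℂ) : ℕ :=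
  #{i | χ (cubeGenerators N i) ≠ 1}

theorem addChar_cubeGenerators_eq_one_or (χ : AddChar (Vtx N) ℂ) (i : Fin N) :
    χ (cubeGenerators N i) = 1 ∨ χ (cubeGenerators N i) = -1 := by
  have hdouble : cubeGenerators N i + cubeGenerators N i = 0 :=
    funext fun j => CharTwo.add_self_eq_zero (cubeGenerators N i j)
  rw [← mul_self_eq_one_iff, ← AddChar.map_add_eq_mul, hdouble, AddChar.map_zero_eq_one]

theorem sum_one_sub_cubeGenerators (χ : AddChar (Vtx N) ℂ) :
    ∑ i, (1 - χ (cubeGenerators N i)) = ((2 * charWeight χ : ℝ) : ℂ) := by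
  have hterm (i : Fin N) :
      1 - χ (cubeGenerators N i) = if χ (cubeGenerators N i) ≠ 1 then 2 else 0 := by
    rcases addChar_cubeGenerators_eq_one_or χ i with h | h <;> norm_num [h]
  simp only [hterm, sum_ite, sum_const, nsmul_eq_mul, charWeight]
  push_cast
  ring

theorem span_cubeLap_eigenvectors_eq_charSpan (S : Set ℝ) :
    Submodule.span ℂ {f | ∃ μ ∈ S, cubeLap N f = fun v => (μ : ℂ) * f v} =
      charSpan {χ | 2 * (charWeight χ : ℝ) ∈ S} := by
  simp only [cubeLap_eq_cayleyLap]
  exact span_cayleyLap_eigenvectors_eq_charSpan sum_one_sub_cubeGenerators S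

theorem PWcube_eq_charSpan (Ω : ℝ) : PWcube N Ω = charSpan {χ | 2 * (charWeight χ : ℝ) ≤ Ω} :=
  span_cubeLap_eigenvectors_eq_charSpan (Set.Iic Ω)

theorem span_cubeLap_eigenspace_eq_charSpan (a : ℝ) :
    Submodule.span ℂ {f | cubeLap N f = fun v => (a : ℂ) * f v} =
      charSpan {χ | 2 * (charWeight χ : ℝ) = a} := by
  simpa using span_cubeLap_eigenvectors_eq_charSpan (N := N) {a}

end Cube

section Cycle

variable {m : ℕ}

theorem cycLap_eq_cayleyLap (g : ZMod m → ℂ) : cycLap m g = cayleyLap ![1, -1] g := by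
  ext ℓ
  simp only [cycLap, cayleyLap_apply, Fin.sum_univ_two, Matrix.cons_val_zero, Matrix.cons_val_one,
    sub_eq_add_neg]
  ring

/-- The eigenvalue of the cycle Laplacian on a character of `ℤ/m`; for `ψ 1 = exp (2πik/m)` this
is the familiar `2 - 2 cos (2πk/m)`. -/
def cycEigenvalue (ψ : AddChar (ZMod m) ℂ) : ℝ :=
  2 - 2 * (ψ 1).re

variable [NeZero m]

theorem sum_one_sub_cycGenerators (ψ : AddChar (ZMod m) ℂ) :
    ∑ i, (1 - ψ (![1, -1] i)) = (cycEigenvalue ψ : ℂ) := by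
  have hre := Complex.add_conj (ψ 1)
  simp only [Fin.sum_univ_two, Matrix.cons_val_zero, Matrix.cons_val_one, AddChar.map_neg_eq_conj,
    cycEigenvalue]
  push_cast at hre ⊢
  linear_combination -hre

theorem cycEigenvalue_nonneg (ψ : AddChar (ZMod m) ℂ) : 0 ≤ cycEigenvalue ψ := by
  have := Complex.re_le_norm (ψ 1)
  rw [ψ.norm_apply] at this
  rw [cycEigenvalue]
  linarith

theorem cycEigenvalue_le_four (ψ : AddChar (ZMod m) ℂ) : cycEigenvalue ψ ≤ 4 := by
  have := (abs_le.mp (Complex.abs_re_le_norm (ψ 1))).1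
  rw [ψ.norm_apply] at this
  rw [cycEigenvalue]
  linarith

theorem cycEigenvalue_eq_zero_iff {ψ : AddChar (ZMod m) ℂ} : cycEigenvalue ψ = 0 ↔ ψ = 1 := by
  constructor
  · intro h
    have hre : (ψ 1).re = 1 := by
      rw [cycEigenvalue] at h
      linarith
    have him : (ψ 1).im = 0 := by
      rw [← Complex.abs_re_eq_norm, hre, abs_one, ψ.norm_apply]
    by_contra hne
    exact (AddChar.zmod_char_ne_one_iff m ψ).mp hne (Complex.ext hre him)
  · rintro rfl
    simp [cycEigenvalue]

theorem PWcyc_eq_charSpan (Ω : ℝ) : PWcyc m Ω = charSpan {ψ | cycEigenvalue ψ ≤ Ω} := by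
  simp only [PWcyc, cycLap_eq_cayleyLap]
  exact span_cayleyLap_eigenvectors_eq_charSpan sum_one_sub_cycGenerators (Set.Iic Ω)

end Cycle

section Product

variable {N m : ℕ}

theorem prodLap_eq_cayleyLap (F : Vtx N × ZMod m → ℂ) :
    prodLap N m F = cayleyLap (prodGenerators (cubeGenerators N) ![1, -1]) F := by
  ext x
  rw [cayleyLap_prodGenerators_apply, ← cubeLap_eq_cayleyLap, ← cycLap_eq_cayleyLap]
  rfl

theorem PWprod_eq_charSpan [NeZero m] (Ω : ℝ) :
    PWprod N m Ω =
      charSpan {θ | 2 * (charWeight (fstChar θ) : ℝ) + cycEigenvalue (sndChar θ) ≤ Ω} := by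
  simp only [PWprod, prodLap_eq_cayleyLap]
  refine span_cayleyLap_eigenvectors_eq_charSpan (fun θ => ?_) (Set.Iic Ω)
  rw [sum_one_sub_prodGenerators, sum_one_sub_cubeGenerators, sum_one_sub_cycGenerators,
    Complex.ofReal_add]

theorem S1_eq_map₂ (K : ℕ) : S1 N K m = Submodule.map₂ tensor (PWcube N (2 * K - 4)) ⊤ := by
  rw [Submodule.map₂_eq_span_image2, S1]
  congr 1
  ext F
  simp [tensor, eq_comm]

theorem S2_eq_map₂ (K : ℕ) :
    S2 N K m = Submodule.map₂ tensor
      (Submodule.span ℂ {f | cubeLap N f = fun v => ((2 * K - 2 : ℝ) : ℂ) * f v}) (PWcyc m 2) := by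
  rw [map₂_span_left, S2]
  congr 1
  ext F
  simp only [Set.mem_image2, SetLike.mem_coe, Set.mem_ofPred_eq, tensor, LinearMap.mk₂_apply,
    eq_comm (b := F), exists_and_left]

theorem S3_eq_map₂ (K : ℕ) :
    S3 N K m = Submodule.map₂ tensor
      (Submodule.span ℂ {f | cubeLap N f = fun v => ((2 * K : ℝ) : ℂ) * f v}) (charSpan {1}) := by
  rw [map₂_span_left, S3]
  congr 1
  ext F
  constructor
  · rintro ⟨f, c, hf, rfl⟩
    exact ⟨f, hf, fun _ => c, mem_charSpan_one_iff.mpr ⟨c, rfl⟩, rfl⟩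
  · rintro ⟨f, hf, g, hg, rfl⟩
    obtain ⟨c, rfl⟩ := mem_charSpan_one_iff.mp hg
    exact ⟨f, c, hf, rfl⟩

variable [NeZero m]

theorem S1_eq_charSpan (K : ℕ) :
    S1 N K m = charSpan {θ | charWeight (fstChar θ) + 2 ≤ K} := by
  rw [S1_eq_map₂, PWcube_eq_charSpan, ← charSpan_univ, map₂_tensor_charSpan]
  congr! 3 with θ
  rw [and_iff_left (Set.mem_univ _), Set.mem_ofPred_eq, ← Nat.cast_le (α := ℝ)]
  push_cast
  constructor <;> intro h <;> linarith

theorem S2_eq_charSpan (K : ℕ) :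
    S2 N K m =
      charSpan {θ | charWeight (fstChar θ) + 1 = K ∧ cycEigenvalue (sndChar θ) ≤ 2} := by
  rw [S2_eq_map₂, span_cubeLap_eigenspace_eq_charSpan, PWcyc_eq_charSpan, map₂_tensor_charSpan]
  congr! 4 with θ
  rw [Set.mem_ofPred_eq, ← Nat.cast_inj (R := ℝ)]
  push_cast
  constructor <;> intro h <;> linarith

theorem S3_eq_charSpan (K : ℕ) :
    S3 N K m = charSpan {θ | charWeight (fstChar θ) = K ∧ cycEigenvalue (sndChar θ) = 0} := by
  rw [S3_eq_map₂, span_cubeLap_eigenspace_eq_charSpan, map₂_tensor_charSpan]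
  simp [cycEigenvalue_eq_zero_iff]

theorem two_mul_add_le_two_mul_iff {j K : ℕ} {b : ℝ} (hb₀ : 0 ≤ b) (hb₄ : b ≤ 4) :
    2 * (j : ℝ) + b ≤ 2 * K ↔ (j + 2 ≤ K ∨ j + 1 = K ∧ b ≤ 2) ∨ j = K ∧ b = 0 := by
  constructor
  · intro h
    have hjK : j ≤ K := by
      rw [← Nat.cast_le (α := ℝ)]
      linarith
    rcases (by omega : j + 2 ≤ K ∨ j + 1 = K ∨ j = K) with hj | rfl | rfl
    · exact .inl (.inl hj)
    · push_cast at h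
      exact .inl (.inr ⟨rfl, by linarith⟩)
    · exact .inr ⟨rfl, by linarith⟩
  · rintro ((hj | ⟨rfl, hb⟩) | ⟨rfl, rfl⟩)
    · have : (j : ℝ) + 2 ≤ K := mod_cast hj
      linarith
    · push_cast
      linarith
    · linarith

end Product

theorem stmt11_general (N K m : ℕ) [NeZero m] :
    (∀ F ∈ S1 N K m, ∀ G ∈ S2 N K m, ip F G = 0) ∧
    (∀ F ∈ S1 N K m, ∀ G ∈ S3 N K m, ip F G = 0) ∧
    (∀ F ∈ S2 N K m, ∀ G ∈ S3 N K m, ip F G = 0) ∧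
    S1 N K m ⊔ S2 N K m ⊔ S3 N K m = PWprod N m (2 * (K : ℝ)) := by
  simp only [S1_eq_charSpan, S2_eq_charSpan, S3_eq_charSpan, PWprod_eq_charSpan]
  refine ⟨ip_eq_zero_of_mem_charSpan ?_, ip_eq_zero_of_mem_charSpan ?_,
    ip_eq_zero_of_mem_charSpan ?_, ?_⟩
  · exact Set.disjoint_left.mpr fun θ h₁ h₂ => by grind
  · exact Set.disjoint_left.mpr fun θ h₁ h₃ => by grind
  · exact Set.disjoint_left.mpr fun θ h₂ h₃ => by grind
  · rw [← charSpan_union, ← charSpan_union]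
    congr 1
    ext θ
    exact (two_mul_add_le_two_mul_iff (cycEigenvalue_nonneg _) (cycEigenvalue_le_four _)).symm

/-- PW_{2K}(B_N □ C_m) is the orthogonal direct sum of the
components (i), (ii), (iii). -/
theorem stmt11 (N K m : ℕ) [NeZero m] (hK : 3 ≤ K) (hKN : K < N) (hm : 3 ≤ m) :
    (∀ F ∈ S1 N K m, ∀ G ∈ S2 N K m, ip F G = 0) ∧
    (∀ F ∈ S1 N K m, ∀ G ∈ S3 N K m, ip F G = 0) ∧
    (∀ F ∈ S2 N K m, ∀ G ∈ S3 N K m, ip F G = 0) ∧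
    S1 N K m ⊔ S2 N K m ⊔ S3 N K m = PWprod N m (2 * (K : ℝ)) :=
  stmt11_general N K m
end
end

section
/- Let m ≥ 3, let 1 ≤ K ≤ N, and let ψ ∈ Λ_{2K}(B_N). Then the function F(u,ℓ) = ψ(u)/√m (constant in ℓ) lies in PW_{2K}(B_N □ C_m) and satisfies PQF = (1/m)·F, where P is the orthogonal projection onto PW_{2K}(B_N □ C_m) and Q is truncation to the zero slice. Moreover, if {ψ_ν} is an orthonormal basis of Λ_{2K}(B_N), then every F in the span of {f ⊗ 𝟙/√m : f ∈ Λ_{2K}(B_N)} (𝟙 the constant function 1 on ZMod m) satisfies Σ_ν |⟨F, Q(ψ_ν ⊗ 𝟙/√m)⟩|² = (1/m)·‖QF‖². -/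
open Complex Finset
open scoped Real Classical

noncomputable section

/-!
For `ψ` in the `lam`-eigenspace of a symmetric operator `A`, pairing each fibre of `G` with `ψ`
intertwines the Kronecker sum `A ⊞ B` with `B + lam`. It therefore sends an eigenvector of `A ⊞ B`
with eigenvalue at most `lam` to an eigenvector of `B` with nonpositive eigenvalue, which for the
Laplacian of a connected graph is constant. So every `G` in the Paley–Wiener space has the same
pairing with `ψ` on all slices, and truncating `ψ ⊗ 1` to one of the `m` slices keeps exactly the
fraction `1 / m` of its inner product with `G`. The energy identity is Parseval's identity on a
single slice.
-/

section InnerProduct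

variable {V ι : Type*} [Fintype V]

theorem ip_eq_inner (f g : V → ℂ) : ip f g = inner ℂ (WithLp.toLp 2 g) (WithLp.toLp 2 f) := by
  simp only [ip, PiLp.inner_apply, RCLike.inner_apply]

theorem conj_ip (f g : V → ℂ) : starRingEnd ℂ (ip f g) = ip g f := by
  simp only [ip_eq_inner, inner_conj_symm]

theorem ip_smul_left (c : ℂ) (f g : V → ℂ) : ip (c • f) g = c * ip f g := by
  rw [ip_eq_inner, ip_eq_inner, WithLp.toLp_smul, inner_smul_right]

theorem ip_smul_right (c : ℂ) (f g : V → ℂ) : ip f (c • g) = starRingEnd ℂ c * ip f g := by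
  rw [ip_eq_inner, ip_eq_inner, WithLp.toLp_smul, inner_smul_left]

theorem ip_self (f : V → ℂ) : ip f f = ((∑ v, ‖f v‖ ^ 2 : ℝ) : ℂ) := by
  simp only [ip, Complex.mul_conj', Complex.ofReal_sum, Complex.ofReal_pow]

theorem sum_sq_norm_inner_of_mem_span {𝕜 E : Type*} [RCLike 𝕜] [NormedAddCommGroup E]
    [InnerProductSpace 𝕜 E] [Fintype ι] {b : ι → E} (hb : Orthonormal 𝕜 b) {x : E}
    (hx : x ∈ Submodule.span 𝕜 (Set.range b)) : ∑ i, ‖inner 𝕜 (b i) x‖ ^ 2 = ‖x‖ ^ 2 := by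
  obtain ⟨c, rfl⟩ := (Submodule.mem_span_range_iff_exists_fun 𝕜).1 hx
  have hnorm := hb.inner_sum c c Finset.univ
  simp only [inner_self_eq_norm_sq_to_K, RCLike.conj_mul] at hnorm
  simp only [hb.inner_right_fintype]
  exact_mod_cast hnorm.symm

theorem sum_sq_norm_ip_of_mem_span [Fintype ι] [DecidableEq ι] {b : ι → V → ℂ}
    (hb : ∀ i j, ip (b i) (b j) = if i = j then 1 else 0) {f : V → ℂ}
    (hf : f ∈ Submodule.span ℂ (Set.range b)) : ∑ i, ‖ip f (b i)‖ ^ 2 = ∑ v, ‖f v‖ ^ 2 := by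
  have horth : Orthonormal ℂ fun i => WithLp.toLp 2 (b i) := by
    rw [orthonormal_iff_ite]
    intro i j
    rw [← ip_eq_inner, hb]
    simp only [eq_comm]
  have hmem : WithLp.toLp 2 f ∈ Submodule.span ℂ (Set.range fun i => WithLp.toLp 2 (b i)) := by
    have := Submodule.mem_map_of_mem (f := (WithLp.linearEquiv 2 ℂ (V → ℂ)).symm.toLinearMap) hf
    rwa [Submodule.map_span, ← Set.range_comp] at this
  simpa only [ip_eq_inner, EuclideanSpace.norm_sq_eq] using
    sum_sq_norm_inner_of_mem_span horth hmem

end InnerProduct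

/-- The Paley–Wiener space of an operator `T` on functions: the span of its eigenvectors with real
eigenvalue at most `Ω`. -/
def paleyWiener {V : Type*} (T : Module.End ℂ (V → ℂ)) (Ω : ℝ) : Submodule ℂ (V → ℂ) :=
  Submodule.span ℂ {f | ∃ μ : ℝ, μ ≤ Ω ∧ T f = (μ : ℂ) • f}

section KroneckerSum

variable {U W : Type*} {A : Module.End ℂ (U → ℂ)} {B : Module.End ℂ (W → ℂ)} {lam : ℝ}
  {ψ : U → ℂ}

/-- The Kronecker sum `A ⊗ 1 + 1 ⊗ B`, acting on functions of two variables; for the Laplacians of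
two graphs it is the Laplacian of their Cartesian product. -/
def kroneckerSum (A : Module.End ℂ (U → ℂ)) (B : Module.End ℂ (W → ℂ)) :
    Module.End ℂ (U × W → ℂ) :=
  LinearMap.pi fun x =>
    LinearMap.proj x.1 ∘ₗ A ∘ₗ LinearMap.funLeft ℂ ℂ (·, x.2) +
      LinearMap.proj x.2 ∘ₗ B ∘ₗ LinearMap.funLeft ℂ ℂ (x.1, ·)

theorem kroneckerSum_apply (F : U × W → ℂ) (x : U × W) :
    kroneckerSum A B F x = A (fun u => F (u, x.2)) x.1 + B (fun w => F (x.1, w)) x.2 :=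
  rfl

theorem kroneckerSum_comp_fst (hB : B 1 = 0) (f : U → ℂ) :
    kroneckerSum A B (f ∘ Prod.fst) = A f ∘ Prod.fst := by
  funext x
  have hconst : (fun _ : W => f x.1) = f x.1 • 1 := by
    funext w
    simp
  simp only [kroneckerSum_apply, Function.comp_apply, hconst, map_smul, hB, smul_zero,
    Pi.zero_apply, add_zero]

theorem comp_fst_mem_paleyWiener (hB : B 1 = 0) (hψ : ψ ∈ A.eigenspace lam) :
    ψ ∘ Prod.fst ∈ paleyWiener (kroneckerSum A B) lam := by
  refine Submodule.subset_span ⟨lam, le_rfl, ?_⟩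
  rw [kroneckerSum_comp_fst hB, Module.End.mem_eigenspace_iff.1 hψ]
  rfl

variable [Fintype U]

/-- The partial inner product `w ↦ ⟨G(·, w), f⟩` of a function `G` of two variables with `f`. -/
def fiberIp (f : U → ℂ) : (U × W → ℂ) →ₗ[ℂ] (W → ℂ) :=
  ∑ u, starRingEnd ℂ (f u) • LinearMap.funLeft ℂ ℂ (u, ·)

theorem fiberIp_apply (f : U → ℂ) (G : U × W → ℂ) (w : W) :
    fiberIp f G w = ip (fun u => G (u, w)) f := by
  simp [fiberIp, ip, LinearMap.funLeft_apply, mul_comm]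

theorem fiberIp_kroneckerSum (hA : ∀ f g, ip (A f) g = ip f (A g)) (hψ : ψ ∈ A.eigenspace lam)
    (G : U × W → ℂ) :
    fiberIp ψ (kroneckerSum A B G) = (lam : ℂ) • fiberIp ψ G + B (fiberIp ψ G) := by
  have hAψ (f : U → ℂ) : ip (A f) ψ = lam * ip f ψ := by
    rw [hA, Module.End.mem_eigenspace_iff.1 hψ, ip_smul_right, Complex.conj_ofReal]
  have hB : B (fiberIp ψ G) = fun w => ip (fun u => B (fun w' => G (u, w')) w) ψ := by
    funext w
    simp [fiberIp, ip, LinearMap.funLeft, Function.comp_def, mul_comm]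
  funext w
  simp only [Pi.add_apply, Pi.smul_apply, smul_eq_mul, hB, fiberIp_apply, ← hAψ]
  simp only [ip, kroneckerSum_apply, add_mul, Finset.sum_add_distrib]

theorem fiberIp_mem_paleyWiener_zero (hA : ∀ f g, ip (A f) g = ip f (A g))
    (hψ : ψ ∈ A.eigenspace lam) {G : U × W → ℂ} (hG : G ∈ paleyWiener (kroneckerSum A B) lam) :
    fiberIp ψ G ∈ paleyWiener B 0 := by
  suffices paleyWiener (kroneckerSum A B) lam ≤ (paleyWiener B 0).comap (fiberIp ψ) from this hG
  refine Submodule.span_le.2 ?_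
  rintro G ⟨μ, hμ, hG⟩
  refine Submodule.subset_span ⟨μ - lam, sub_nonpos.2 hμ, ?_⟩
  have h := fiberIp_kroneckerSum (B := B) hA hψ G
  rw [hG, map_smul] at h
  rw [Complex.ofReal_sub, sub_smul, h, add_sub_cancel_left]

theorem ip_comp_fst [Fintype W] (f : U → ℂ) (G : U × W → ℂ) :
    ip (f ∘ Prod.fst) G = ∑ w, ip f fun u => G (u, w) := by
  simp only [ip, Fintype.sum_prod_type_right, Function.comp_apply]

end KroneckerSum

section Truncation

variable {U W : Type*} [DecidableEq W]

/-- Truncation of a function on `U × W` to the slice `U × {w₀}`. -/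
def truncSlice (w₀ : W) (F : U × W → ℂ) : U × W → ℂ :=
  fun x => if x.2 = w₀ then F x else 0

variable [Fintype U] [Fintype W] {A : Module.End ℂ (U → ℂ)} {B : Module.End ℂ (W → ℂ)} {lam : ℝ}
  {ψ : U → ℂ}

theorem ip_truncSlice_left (w₀ : W) (F G : U × W → ℂ) :
    ip (truncSlice w₀ F) G = ip (fun u => F (u, w₀)) fun u => G (u, w₀) := by
  simp [ip, truncSlice, Fintype.sum_prod_type]

theorem ip_truncSlice_right (w₀ : W) (F G : U × W → ℂ) :
    ip F (truncSlice w₀ G) = ip (fun u => F (u, w₀)) fun u => G (u, w₀) := by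
  rw [← conj_ip, ip_truncSlice_left, conj_ip]

theorem sum_sq_norm_truncSlice (w₀ : W) (F : U × W → ℂ) :
    ∑ x, ‖truncSlice w₀ F x‖ ^ 2 = ∑ u, ‖F (u, w₀)‖ ^ 2 := by
  simp [truncSlice, Fintype.sum_prod_type, apply_ite norm, ite_pow]

theorem ip_truncSlice_comp_fst (hA : ∀ f g, ip (A f) g = ip f (A g))
    (hB : paleyWiener B 0 ≤ ℂ ∙ 1) (w₀ : W) (hψ : ψ ∈ A.eigenspace lam) {G : U × W → ℂ}
    (hG : G ∈ paleyWiener (kroneckerSum A B) lam) :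
    ip (truncSlice w₀ (ψ ∘ Prod.fst)) G = 1 / (Fintype.card W : ℂ) * ip (ψ ∘ Prod.fst) G := by
  obtain ⟨c, hc⟩ := Submodule.mem_span_singleton.1 (hB (fiberIp_mem_paleyWiener_zero hA hψ hG))
  have hslice (w : W) : ip ψ (fun u => G (u, w)) = starRingEnd ℂ c := by
    rw [← conj_ip, ← fiberIp_apply, ← hc, Pi.smul_apply, Pi.one_apply, smul_eq_mul, mul_one]
  have : Nonempty W := ⟨w₀⟩
  have hcard : (Fintype.card W : ℂ) ≠ 0 := Nat.cast_ne_zero.2 Fintype.card_ne_zero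
  calc ip (truncSlice w₀ (ψ ∘ Prod.fst)) G = ip ψ fun u => G (u, w₀) := ip_truncSlice_left ..
    _ = 1 / (Fintype.card W : ℂ) * ∑ _w : W, starRingEnd ℂ c := by
      rw [hslice, Finset.sum_const, Finset.card_univ, nsmul_eq_mul]
      field_simp
    _ = 1 / (Fintype.card W : ℂ) * ip (ψ ∘ Prod.fst) G := by
      simp only [ip_comp_fst, hslice]

theorem sum_sq_norm_ip_truncSlice {ι : Type*} [Fintype ι] [DecidableEq ι] {b : ι → U → ℂ}
    (hb : ∀ i j, ip (b i) (b j) = if i = j then 1 else 0) {r : ℝ} (hr : 0 ≤ r) (w₀ : W)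
    {F : U × W → ℂ} (hF : (fun u => F (u, w₀)) ∈ Submodule.span ℂ (Set.range b)) :
    ∑ i, ‖ip F (truncSlice w₀ fun x => b i x.1 / (√r : ℂ))‖ ^ 2 =
      1 / r * ∑ x, ‖truncSlice w₀ F x‖ ^ 2 := by
  have hscale (i : ι) : ‖ip F (truncSlice w₀ fun x => b i x.1 / (√r : ℂ))‖ ^ 2 =
      1 / r * ‖ip (fun u => F (u, w₀)) (b i)‖ ^ 2 := by
    have hdiv : (fun u => b i u / (√r : ℂ)) = ((√r)⁻¹ : ℂ) • b i := by
      funext u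
      simp [div_eq_inv_mul]
    rw [ip_truncSlice_right, hdiv, ip_smul_right, norm_mul, mul_pow, RCLike.norm_conj, norm_inv,
      Complex.norm_real, inv_pow, Real.norm_eq_abs, sq_abs, Real.sq_sqrt hr, one_div]
  simp only [hscale, ← Finset.mul_sum, sum_sq_norm_ip_of_mem_span hb hF, sum_sq_norm_truncSlice]

end Truncation

section Cube

open scoped Matrix

/-- The Boolean cube as a `SimpleGraph`, giving access to Mathlib's Laplacian matrix. -/
def cubeGraph (N : ℕ) : SimpleGraph (Vtx N) where
  Adj := cubeAdj
  symm := ⟨fun v w h => by simpa only [cubeAdj, ne_comm] using h⟩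
  loopless := ⟨fun v h => by simp [cubeAdj] at h⟩

instance (N : ℕ) : DecidableRel (cubeGraph N).Adj :=
  inferInstanceAs (DecidableRel cubeAdj)

theorem cubeLap_eq_lapMatrix_mulVec (N : ℕ) (f : Vtx N → ℂ) :
    cubeLap N f = (cubeGraph N).lapMatrix ℂ *ᵥ f := by
  funext v
  have hnbr : (cubeGraph N).neighborFinset v = ({w | cubeAdj v w} : Finset _) := by
    ext w
    rw [SimpleGraph.mem_neighborFinset, Finset.mem_filter_univ, cubeGraph]
  rw [SimpleGraph.lapMatrix_mulVec_apply, ← SimpleGraph.card_neighborFinset_eq_degree, hnbr,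
    cubeLap, Finset.sum_sub_distrib, Finset.sum_const, nsmul_eq_mul]

/-- `cubeLap` as a linear operator. -/
def cubeLaplacian (N : ℕ) : Module.End ℂ (Vtx N → ℂ) where
  toFun := cubeLap N
  map_add' f g := by simp only [cubeLap_eq_lapMatrix_mulVec, Matrix.mulVec_add]
  map_smul' c f := by simp only [cubeLap_eq_lapMatrix_mulVec, Matrix.mulVec_smul, RingHom.id_apply]

theorem ip_cubeLaplacian_left (N : ℕ) (f g : Vtx N → ℂ) :
    ip (cubeLaplacian N f) g = ip f (cubeLaplacian N g) := by
  change ip (cubeLap N f) g = ip f (cubeLap N g)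
  have hL := (cubeGraph N).isHermitian_lapMatrix (R := ℂ)
  rw [cubeLap_eq_lapMatrix_mulVec, cubeLap_eq_lapMatrix_mulVec]
  change _ ⬝ᵥ star g = f ⬝ᵥ star _
  rw [Matrix.star_mulVec, hL.eq, dotProduct_comm, Matrix.dotProduct_mulVec, dotProduct_comm]

end Cube

section Cycle

variable (m : ℕ)

/-- `cycLap` as a linear operator. -/
def cycleLaplacian : Module.End ℂ (ZMod m → ℂ) where
  toFun := cycLap m
  map_add' f g := by
    funext ℓ
    simp only [cycLap, Pi.add_apply]
    ring
  map_smul' c f := by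
    funext ℓ
    simp only [cycLap, Pi.smul_apply, smul_eq_mul, RingHom.id_apply]
    ring

theorem cycleLaplacian_one : cycleLaplacian m 1 = 0 := by
  funext ℓ
  change (2 * 1 - 1 - 1 : ℂ) = 0
  norm_num

variable {m} [NeZero m]

theorem ip_cycLap_self (h : ZMod m → ℂ) :
    ip (cycLap m h) h = ((∑ ℓ, ‖h (ℓ + 1) - h ℓ‖ ^ 2 : ℝ) : ℂ) := by
  have hshift : ∑ ℓ, (h ℓ - h (ℓ - 1)) * starRingEnd ℂ (h ℓ) =
      ∑ ℓ, (h (ℓ + 1) - h ℓ) * starRingEnd ℂ (h (ℓ + 1)) := by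
    rw [← Equiv.sum_comp (Equiv.addRight (1 : ZMod m))]
    simp only [Equiv.coe_addRight, add_sub_cancel_right]
  calc ip (cycLap m h) h
      = ∑ ℓ, (h ℓ - h (ℓ - 1)) * starRingEnd ℂ (h ℓ) -
          ∑ ℓ, (h (ℓ + 1) - h ℓ) * starRingEnd ℂ (h ℓ) := by
        rw [ip, ← Finset.sum_sub_distrib]
        exact Finset.sum_congr rfl fun ℓ _ => by rw [cycLap]; ring
    _ = ip (fun ℓ => h (ℓ + 1) - h ℓ) fun ℓ => h (ℓ + 1) - h ℓ := by
        simp only [hshift, ip, ← Finset.sum_sub_distrib, ← mul_sub, ← map_sub]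
    _ = _ := ip_self _

theorem paleyWiener_cycleLaplacian_zero_le : paleyWiener (cycleLaplacian m) 0 ≤ ℂ ∙ 1 := by
  refine Submodule.span_le.2 ?_
  rintro h ⟨t, ht, hth⟩
  have henergy : ∑ ℓ, ‖h (ℓ + 1) - h ℓ‖ ^ 2 = t * ∑ ℓ, ‖h ℓ‖ ^ 2 := by
    refine Complex.ofReal_injective ?_
    rw [← ip_cycLap_self, Complex.ofReal_mul, ← ip_self, ← ip_smul_left, ← hth]
    rfl
  have hzero : ∑ ℓ, ‖h (ℓ + 1) - h ℓ‖ ^ 2 = 0 :=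
    le_antisymm (henergy ▸ mul_nonpos_of_nonpos_of_nonneg ht (by positivity)) (by positivity)
  have hperiodic : Function.Periodic h 1 := fun ℓ => by
    have := (Finset.sum_eq_zero_iff_of_nonneg fun _ _ => by positivity).1 hzero ℓ
      (Finset.mem_univ ℓ)
    rwa [sq_eq_zero_iff, norm_eq_zero, sub_eq_zero] at this
  refine Submodule.mem_span_singleton.2 ⟨h 0, funext fun ℓ => ?_⟩
  simpa using (hperiodic.nat_mul_eq ℓ.val).symm

end Cycle

theorem slice_mem_eigenspace_of_mem_S3 {N K m : ℕ} {F : Vtx N × ZMod m → ℂ} (hF : F ∈ S3 N K m)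
    (ℓ : ZMod m) : (fun u => F (u, ℓ)) ∈ (cubeLaplacian N).eigenspace ((2 * K : ℝ) : ℂ) := by
  suffices S3 N K m ≤ ((cubeLaplacian N).eigenspace ((2 * K : ℝ) : ℂ)).comap
      (LinearMap.funLeft ℂ ℂ (·, ℓ)) from this hF
  refine Submodule.span_le.2 ?_
  rintro _ ⟨f, c, hf, rfl⟩
  have hcf : LinearMap.funLeft ℂ ℂ (·, ℓ) (fun x => f x.1 * c) = c • f :=
    funext fun u => mul_comm (f u) c
  rw [SetLike.mem_coe, Submodule.mem_comap, hcf]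
  exact Submodule.smul_mem _ c (Module.End.mem_eigenspace_iff.2 hf)

theorem stmt16_general {U W : Type*} [Fintype U] [Fintype W] [DecidableEq W]
    {A : Module.End ℂ (U → ℂ)} (hA : ∀ f g, ip (A f) g = ip f (A g))
    {B : Module.End ℂ (W → ℂ)} (hB₁ : B 1 = 0) (hB : paleyWiener B 0 ≤ ℂ ∙ 1)
    (w₀ : W) {lam : ℝ} {ψ : U → ℂ} (hψ : ψ ∈ A.eigenspace lam) :
    (fun x : U × W => ψ x.1 / (√(Fintype.card W) : ℂ)) ∈ paleyWiener (kroneckerSum A B) lam ∧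
    (∀ G ∈ paleyWiener (kroneckerSum A B) lam,
      ip (truncSlice w₀ fun x => ψ x.1 / (√(Fintype.card W) : ℂ)) G =
        ip (fun x => ((1 / (Fintype.card W : ℝ) : ℝ) : ℂ) *
          (ψ x.1 / (√(Fintype.card W) : ℂ))) G) ∧
    ∀ {ι : Type*} [Fintype ι] [DecidableEq ι] (b : ι → U → ℂ),
      (∀ i j, ip (b i) (b j) = if i = j then 1 else 0) →
      A.eigenspace lam ≤ Submodule.span ℂ (Set.range b) →
      ∀ F : U × W → ℂ, (fun u => F (u, w₀)) ∈ A.eigenspace lam →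
        ∑ i, ‖ip F (truncSlice w₀ fun x => b i x.1 / (√(Fintype.card W) : ℂ))‖ ^ 2 =
          1 / (Fintype.card W : ℝ) * ∑ x, ‖truncSlice w₀ F x‖ ^ 2 := by
  set s : ℂ := (√(Fintype.card W) : ℂ)
  have hψs : (fun u => ψ u / s) ∈ A.eigenspace lam := by
    have hdiv : (fun u => ψ u / s) = s⁻¹ • ψ := funext fun u => div_eq_inv_mul (ψ u) s
    exact hdiv ▸ Submodule.smul_mem _ _ hψ
  refine ⟨comp_fst_mem_paleyWiener hB₁ hψs, fun G hG => ?_, fun b hb hspan F hF =>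
    sum_sq_norm_ip_truncSlice hb (Nat.cast_nonneg _) w₀ (hspan hF)⟩
  refine (ip_truncSlice_comp_fst hA hB w₀ hψs hG).trans ?_
  rw [← ip_smul_left]
  push_cast
  rfl

/-- for ψ ∈ Λ_{2K}(B_N), the function F(u,ℓ) = ψ(u)/√m lies in
PW_{2K}(B_N □ C_m) and PQF = (1/m)·F (P(QF) = cF is expressed by: cF ∈ PW and
QF − cF ⊥ PW_{2K}); moreover for an orthonormal basis {ψ_ν} of Λ_{2K}(B_N),
every F in the span of {f ⊗ 𝟙/√m : f ∈ Λ_{2K}(B_N)} satisfies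
Σ_ν |⟨F, Q(ψ_ν ⊗ 𝟙/√m)⟩|² = (1/m)·‖QF‖². -/
theorem stmt16 (N K m : ℕ) [NeZero m] (hm : 3 ≤ m) (hK : 1 ≤ K) (hKN : K ≤ N)
    (ψ : Vtx N → ℂ)
    (hψ : cubeLap N ψ = fun v => ((2 * (K : ℝ) : ℝ) : ℂ) * ψ v) :
    (fun x : Vtx N × ZMod m => ψ x.1 / (Real.sqrt m : ℂ)) ∈
        PWprod N m (2 * (K : ℝ)) ∧
    (∀ G ∈ PWprod N m (2 * (K : ℝ)),
      ip (Qslice N m (fun x => ψ x.1 / (Real.sqrt m : ℂ))) G =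
        ip (fun x => ((1 / (m : ℝ) : ℝ) : ℂ) * (ψ x.1 / (Real.sqrt m : ℂ))) G) ∧
    (∀ ψs : Fin (N.choose K) → (Vtx N → ℂ),
      (∀ ν, cubeLap N (ψs ν) = fun v => ((2 * (K : ℝ) : ℝ) : ℂ) * ψs ν v) →
      (∀ ν ν', ip (ψs ν) (ψs ν') = if ν = ν' then 1 else 0) →
      (∀ f : Vtx N → ℂ, (cubeLap N f = fun v => ((2 * (K : ℝ) : ℝ) : ℂ) * f v) →
        f ∈ Submodule.span ℂ (Set.range ψs)) →
      ∀ F ∈ S3 N K m,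
        ∑ ν, ‖ip F (Qslice N m (fun x => ψs ν x.1 / (Real.sqrt m : ℂ)))‖ ^ 2 =
          (1 / (m : ℝ)) * ∑ x, ‖Qslice N m F x‖ ^ 2) := by
  obtain ⟨hmem, hproj, hparseval⟩ := stmt16_general (ip_cubeLaplacian_left N)
    (cycleLaplacian_one m) paleyWiener_cycleLaplacian_zero_le 0 (Module.End.mem_eigenspace_iff.2 hψ)
  simp only [ZMod.card] at hmem hproj hparseval
  exact ⟨hmem, hproj, fun ψs _ horth hspan F hF => hparseval ψs horth
    (fun f hf => hspan f (Module.End.mem_eigenspace_iff.1 hf)) F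
    (slice_mem_eigenspace_of_mem_S3 hF 0)⟩
end
end

section
/- Let m = 4m' + 1 with m' ≥ 1 and let 3 ≤ K < N. Then the dimension of PW_{2K}(B_N □ C_m) equals m·Σ_{κ=0}^{K−2} binom(N,κ) + ((m+1)/2)·binom(N,K−1) + binom(N,K). -/
open Complex Finset
open scoped Real Classical

noncomputable section

/-!
`B_N □ C_m` is a Cayley graph of the finite abelian group `(ℤ/2)^N × ℤ/m`, so its Laplacian is
diagonalised by the characters of that group. These are indexed by pairs `(S, j)` with
`S ⊆ {1, …, N}` and `j ∈ ℤ/m`, with eigenvalue `2|S| + 2 - 2 cos (2πj/m)`. For `Ω = 2K` the pair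
contributes iff `|S| + 1 - K ≤ cos (2πj/m)`, which holds for every `j` if `|S| ≤ K - 2`, for the
`2⌊m/4⌋ + 1` residues in the right half of the circle if `|S| = K - 1`, for `j = 0` alone if
`|S| = K`, and for no `j` if `|S| > K`.
-/

section Eigenbasis

variable {ι R M : Type*} [CommRing R] [IsDomain R] [AddCommGroup M] [Module R M]
  (b : Module.Basis ι R M) {L : Module.End R M} {ev : ι → R}

lemma repr_eq_zero_of_apply_eq_smul (hL : ∀ i, L (b i) = ev i • b i) {μ : R} {f : M}
    (hf : L f = μ • f) {i : ι} (hi : ev i ≠ μ) : b.repr f i = 0 := by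
  have hcoord : b.coord i ∘ₗ L = ev i • b.coord i := b.ext fun k => by
    obtain rfl | hk := eq_or_ne k i
    · simp [hL]
    · simp [hL, hk]
  have hev : μ * b.repr f i = ev i * b.repr f i := by
    simpa [hf] using LinearMap.congr_fun hcoord f
  have hprod : (ev i - μ) * b.repr f i = 0 := by linear_combination -hev
  exact (mul_eq_zero.1 hprod).resolve_left (sub_ne_zero.2 hi)

lemma span_eigenvectors_eq_span_image_s17 (hL : ∀ i, L (b i) = ev i • b i) (s : Set R) :
    Submodule.span R {f | ∃ μ ∈ s, L f = μ • f} = Submodule.span R (b '' {i | ev i ∈ s}) := by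
  refine le_antisymm (Submodule.span_le.2 ?_) (Submodule.span_mono ?_)
  · rintro f ⟨μ, hμ, hf⟩
    refine b.mem_span_image.2 fun i hi => ?_
    by_contra hev
    exact Finsupp.mem_support_iff.1 hi
      (repr_eq_zero_of_apply_eq_smul b hL hf fun h => hev (show ev i ∈ s from h ▸ hμ))
  · rintro _ ⟨i, hi, rfl⟩
    exact ⟨ev i, hi, hL i⟩

lemma finrank_span_eigenvectors [Fintype ι] (hL : ∀ i, L (b i) = ev i • b i) (s : Set R) :
    Module.finrank R (Submodule.span R {f | ∃ μ ∈ s, L f = μ • f}) = #{i | ev i ∈ s} := by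
  have hli : LinearIndependent R fun i : {i // ev i ∈ s} => b i :=
    b.linearIndependent.comp _ Subtype.val_injective
  rw [span_eigenvectors_eq_span_image_s17 b hL, Set.image_eq_range, ← Fintype.card_subtype]
  exact finrank_span_eq_card hli

end Eigenbasis

section CayleyLaplacian

variable {ι G R : Type*} [Fintype ι] [CommRing R]

/-- The Laplacian of the Cayley graph with generators `s i`, which are counted with multiplicity. It
is the unnormalized graph Laplacian when `s` is injective and its range is symmetric and
avoids `0`. -/
def cayleyLaplacian [Add G] (s : ι → G) : Module.End R (G → R) :=
  ∑ i, (1 - LinearMap.funLeft R R (· + s i))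

lemma cayleyLaplacian_apply [Add G] (s : ι → G) (f : G → R) (x : G) :
    cayleyLaplacian s f x = ∑ i, (f x - f (x + s i)) := by
  simp [cayleyLaplacian, LinearMap.sum_apply, LinearMap.funLeft_apply]

lemma cayleyLaplacian_addChar [AddMonoid G] (s : ι → G) (χ : AddChar G R) :
    cayleyLaplacian s χ = (∑ i, (1 - χ (s i))) • (χ : G → R) := by
  ext x
  simp only [cayleyLaplacian_apply, AddChar.map_add_eq_mul, Pi.smul_apply, smul_eq_mul,
    Finset.sum_mul]
  exact Finset.sum_congr rfl fun i _ => by ring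

lemma finrank_span_eigenvectors_cayleyLaplacian [AddCommGroup G] [Finite G] (s : ι → G)
    (t : Set ℂ) :
    Module.finrank ℂ (Submodule.span ℂ {f : G → ℂ | ∃ μ ∈ t, cayleyLaplacian s f = μ • f}) =
      #{χ : AddChar G ℂ | ∑ i, (1 - χ (s i)) ∈ t} :=
  finrank_span_eigenvectors (AddChar.complexBasis G)
    (fun χ => by rw [AddChar.complexBasis_apply, cayleyLaplacian_addChar]) t

end CayleyLaplacian

section CubeCycle

variable {N m : ℕ}

lemma cubeAdj_iff_exists_add_single {v w : Vtx N} :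
    cubeAdj v w ↔ ∃ i, v + Pi.single i 1 = w := by
  have ne_iff : ∀ a b : ZMod 2, a ≠ b ↔ a + 1 = b := by decide
  unfold cubeAdj
  simp only [Finset.card_eq_one, Finset.ext_iff, funext_iff, Finset.mem_filter, Finset.mem_univ,
    true_and, Finset.mem_singleton, Pi.add_apply]
  refine exists_congr fun i => forall_congr' fun k => ?_
  obtain rfl | hk := eq_or_ne k i
  · simp [ne_iff]
  · simp [hk]

lemma cubeLap_eq_sum_add_single (f : Vtx N → ℂ) (v : Vtx N) :
    cubeLap N f v = ∑ i, (f v - f (v + Pi.single i 1)) := by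
  have hnbrs : Finset.univ.filter (cubeAdj v) =
      Finset.univ.image fun i => v + Pi.single i (1 : ZMod 2) := by
    ext w
    simp [cubeAdj_iff_exists_add_single]
  have hinj : Function.Injective fun i => v + Pi.single i (1 : ZMod 2) :=
    (add_right_injective v).comp fun i j h => by
      by_contra hij
      simpa [hij] using congrFun h i
  rw [cubeLap, hnbrs, Finset.sum_image hinj.injOn]

/-- The generators `(e_i, 0)` and `(0, ±1)` for which `B_N □ C_m` is a Cayley graph of
`(ℤ/2)^N × ℤ/m`. -/
def cubeCycleStep (N m : ℕ) : Fin N ⊕ Fin 2 → Vtx N × ZMod m :=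
  Sum.elim (fun i => (Pi.single i 1, 0)) ![(0, 1), (0, -1)]

lemma prodLap_eq_cayleyLaplacian (F : Vtx N × ZMod m → ℂ) :
    prodLap N m F = cayleyLaplacian (cubeCycleStep N m) F := by
  ext ⟨u, ℓ⟩
  simp only [prodLap, cubeLap_eq_sum_add_single, cayleyLaplacian_apply, cubeCycleStep,
    Fintype.sum_sum_type, Sum.elim_inl, Sum.elim_inr, Fin.sum_univ_two, Matrix.cons_val_zero,
    Matrix.cons_val_one, Prod.mk_add_mk, add_zero, ← sub_eq_add_neg]
  ring

/-- The character `(u, ℓ) ↦ (-1) ^ (∑ i ∈ S, u i) * exp (2πi j ℓ / m)` of `(ℤ/2)^N × ℤ/m` for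
`p = (S, j)`. -/
def cubeCycleChar [NeZero m] (p : Finset (Fin N) × ZMod m) : AddChar (Vtx N × ZMod m) ℂ :=
  (∏ i ∈ p.1, ZMod.stdAddChar.compAddMonoidHom
    ((Pi.evalAddMonoidHom _ i).comp (AddMonoidHom.fst _ _))) *
  (ZMod.stdAddChar.mulShift p.2).compAddMonoidHom (AddMonoidHom.snd _ _)

variable [NeZero m]

lemma cubeCycleChar_apply (p : Finset (Fin N) × ZMod m) (x : Vtx N × ZMod m) :
    cubeCycleChar p x =
      (∏ i ∈ p.1, ZMod.stdAddChar (x.1 i)) * ZMod.stdAddChar (p.2 * x.2) := by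
  simp [cubeCycleChar, AddChar.prod_apply]

lemma stdAddChar_zmod_two_one : (ZMod.stdAddChar (1 : ZMod 2) : ℂ) = -1 := by
  have h := ZMod.stdAddChar_coe (N := 2) 1
  rw [show 2 * (π : ℂ) * I * ((1 : ℤ) : ℂ) / ((2 : ℕ) : ℂ) = π * I by push_cast; ring,
    Complex.exp_pi_mul_I] at h
  exact_mod_cast h

lemma cubeCycleChar_single (p : Finset (Fin N) × ZMod m) (i : Fin N) :
    cubeCycleChar p (Pi.single i 1, 0) = if i ∈ p.1 then -1 else 1 := by
  have hfactor : ∀ k, (ZMod.stdAddChar ((Pi.single i 1 : Vtx N) k) : ℂ) =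
      if k = i then -1 else 1 := fun k => by
    rw [Pi.single_apply, apply_ite ZMod.stdAddChar, stdAddChar_zmod_two_one,
      AddChar.map_zero_eq_one]
  simp [cubeCycleChar_apply, hfactor, Finset.prod_ite_eq']

lemma cubeCycleChar_zero_left (p : Finset (Fin N) × ZMod m) (ℓ : ZMod m) :
    cubeCycleChar p (0, ℓ) = ZMod.stdAddChar (p.2 * ℓ) := by
  simp [cubeCycleChar_apply]

lemma cubeCycleChar_injective :
    Function.Injective (cubeCycleChar : Finset (Fin N) × ZMod m → _) := by
  rintro ⟨S, j⟩ ⟨T, k⟩ h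
  have hST : S = T := by
    ext i
    have hi := DFunLike.congr_fun h (Pi.single i 1, 0)
    simp only [cubeCycleChar_single] at hi
    split_ifs at hi <;> first | tauto | norm_num at hi
  have hjk : j = k := by
    have h1 := DFunLike.congr_fun h (0, 1)
    simp only [cubeCycleChar_zero_left, mul_one] at h1
    exact ZMod.injective_stdAddChar h1
  rw [hST, hjk]

lemma cubeCycleChar_bijective :
    Function.Bijective (cubeCycleChar : Finset (Fin N) × ZMod m → _) :=
  (Fintype.bijective_iff_injective_and_card _).2
    ⟨cubeCycleChar_injective, by simp only [AddChar.card_eq, Fintype.card_prod,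
      Fintype.card_finset, Fintype.card_fin, Fintype.card_fun, ZMod.card]⟩

lemma sum_one_sub_cubeCycleChar_step (p : Finset (Fin N) × ZMod m) :
    ∑ i, (1 - cubeCycleChar p (cubeCycleStep N m i)) =
      ((2 * #p.1 + (2 - 2 * (ZMod.stdAddChar p.2).re) : ℝ) : ℂ) := by
  have hcube : ∑ i, (1 - cubeCycleChar p (Pi.single i 1, 0)) = 2 * #p.1 := by
    have hterm : ∀ i, (1 - cubeCycleChar p (Pi.single i 1, 0)) = if i ∈ p.1 then 2 else 0 :=
      fun i => by rw [cubeCycleChar_single]; split_ifs <;> norm_num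
    simp [hterm, mul_comm]
  have hcycle := Complex.add_conj (ZMod.stdAddChar p.2)
  rw [← AddChar.map_neg_eq_conj] at hcycle
  simp only [cubeCycleStep, Fintype.sum_sum_type, Sum.elim_inl, Sum.elim_inr, Fin.sum_univ_two,
    Matrix.cons_val_zero, Matrix.cons_val_one, cubeCycleChar_zero_left, hcube, mul_one, mul_neg]
  push_cast at hcycle ⊢
  linear_combination -hcycle

lemma finrank_PWprod (Ω : ℝ) :
    Module.finrank ℂ (PWprod N m Ω) =
      #{p : Finset (Fin N) × ZMod m | 2 * #p.1 + (2 - 2 * (ZMod.stdAddChar p.2).re) ≤ Ω} := by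
  have hPW : PWprod N m Ω = Submodule.span ℂ
      {F | ∃ μ ∈ ofReal '' Set.Iic Ω, cayleyLaplacian (cubeCycleStep N m) F = μ • F} := by
    simp only [Set.exists_mem_image, ← prodLap_eq_cayleyLaplacian]
    rfl
  rw [hPW, finrank_span_eigenvectors_cayleyLaplacian]
  refine (Finset.card_bijective _ cubeCycleChar_bijective fun p => ?_).symm
  simp only [Finset.mem_filter, Finset.mem_univ, true_and, sum_one_sub_cubeCycleChar_step,
    Complex.ofReal_injective.mem_set_image, Set.mem_Iic]

end CubeCycle

section RootsOfUnity

variable {G : Type*} [AddLeftCancelMonoid G] [Finite G]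

lemma abs_re_addChar_le_one (χ : AddChar G ℂ) (x : G) : |(χ x).re| ≤ 1 :=
  (Complex.abs_re_le_norm _).trans_eq (χ.norm_apply x)

lemma one_le_re_addChar_iff {χ : AddChar G ℂ} {x : G} : 1 ≤ (χ x).re ↔ χ x = 1 := by
  refine ⟨fun h => ?_, fun h => by simp [h]⟩
  have hre : (χ x).re = 1 := le_antisymm (le_of_abs_le (abs_re_addChar_le_one χ x)) h
  have him : (χ x).im = 0 := Complex.abs_re_eq_norm.1 (by rw [hre, χ.norm_apply, abs_one])
  exact Complex.ext hre him

variable {m : ℕ} [NeZero m]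

lemma re_stdAddChar_eq_cos (j : ZMod m) :
    (ZMod.stdAddChar j).re = Real.cos (2 * π * j.valMinAbs / m) := by
  have h := ZMod.stdAddChar_coe (N := m) j.valMinAbs
  rw [ZMod.coe_valMinAbs] at h
  rw [h, show 2 * (π : ℂ) * I * (j.valMinAbs : ℂ) / (m : ℂ) =
    ((2 * π * j.valMinAbs / m : ℝ) : ℂ) * I by push_cast; ring, Complex.exp_ofReal_mul_I_re]

lemma one_le_re_stdAddChar_iff {j : ZMod m} : 1 ≤ (ZMod.stdAddChar j).re ↔ j = 0 := by
  rw [one_le_re_addChar_iff, ← ZMod.injective_stdAddChar.eq_iff, AddChar.map_zero_eq_one]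

lemma re_stdAddChar_nonneg_iff {j : ZMod m} :
    0 ≤ (ZMod.stdAddChar j).re ↔ 4 * j.valMinAbs.natAbs ≤ m := by
  have hm : (0 : ℝ) < m := Nat.cast_pos.2 (NeZero.pos m)
  have hhalf : 2 * |(j.valMinAbs : ℝ)| ≤ m := by
    rw [← Int.cast_abs, ← Nat.cast_natAbs]
    have hle := j.natAbs_valMinAbs_le
    exact_mod_cast (by omega : 2 * j.valMinAbs.natAbs ≤ m)
  have hθ : |2 * π * j.valMinAbs / m| = π * (2 * |(j.valMinAbs : ℝ)| / m) := by
    rw [abs_div, abs_mul, abs_of_pos Real.two_pi_pos, abs_of_pos hm]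
    ring
  have hθπ : |2 * π * j.valMinAbs / m| ≤ π := by
    rw [hθ]
    exact mul_le_of_le_one_right Real.pi_pos.le ((div_le_one hm).2 hhalf)
  calc 0 ≤ (ZMod.stdAddChar j).re
      ↔ Real.cos (π / 2) ≤ Real.cos |2 * π * j.valMinAbs / m| := by
        rw [re_stdAddChar_eq_cos, Real.cos_abs, Real.cos_pi_div_two]
    _ ↔ |2 * π * j.valMinAbs / m| ≤ π / 2 :=
        Real.strictAntiOn_cos.le_iff_ge ⟨by positivity, half_le_self Real.pi_pos.le⟩
          ⟨abs_nonneg _, hθπ⟩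
    _ ↔ 2 * |(j.valMinAbs : ℝ)| / m ≤ 1 / 2 := by
        rw [hθ, div_eq_mul_one_div π, mul_le_mul_iff_right₀ Real.pi_pos]
    _ ↔ 4 * |(j.valMinAbs : ℝ)| ≤ m := by
        rw [div_le_iff₀ hm]
        constructor <;> intro h <;> linarith
    _ ↔ 4 * j.valMinAbs.natAbs ≤ m := by
        rw [← Int.cast_abs, ← Nat.cast_natAbs]
        norm_cast

lemma card_four_mul_natAbs_valMinAbs_le :
    #{j : ZMod m | 4 * j.valMinAbs.natAbs ≤ m} = 2 * (m / 4) + 1 := by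
  have himage : Finset.image ZMod.valMinAbs {j : ZMod m | 4 * j.valMinAbs.natAbs ≤ m} =
      Finset.Icc (-(m / 4 : ℤ)) (m / 4) := by
    ext v
    simp only [Finset.mem_image, Finset.mem_filter, Finset.mem_univ, true_and, Finset.mem_Icc]
    constructor
    · rintro ⟨j, hj, rfl⟩
      omega
    · intro hv
      have hm := NeZero.pos m
      have hval : (v : ZMod m).valMinAbs = v :=
        (ZMod.valMinAbs_spec _ _).2 ⟨rfl, by constructor <;> omega⟩
      exact ⟨v, by rw [hval]; omega, hval⟩
  rw [← Finset.card_image_of_injective _ ZMod.injective_valMinAbs, himage, Int.card_Icc]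
  omega

/-- The number of `m`-th roots of unity with real part at least `t`. They are enumerated as the
values `exp (2πi j / m)` of `ZMod.stdAddChar`. -/
def cardRootsOfUnityReGE (m : ℕ) [NeZero m] (t : ℝ) : ℕ :=
  #{j : ZMod m | t ≤ (ZMod.stdAddChar j).re}

lemma cardRootsOfUnityReGE_of_le_neg_one {t : ℝ} (ht : t ≤ -1) : cardRootsOfUnityReGE m t = m := by
  have hall : ∀ j ∈ Finset.univ, t ≤ (ZMod.stdAddChar (N := m) j).re := fun j _ =>
    ht.trans (neg_le_of_abs_le (abs_re_addChar_le_one _ j))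
  rw [cardRootsOfUnityReGE, Finset.filter_true_of_mem hall, Finset.card_univ, ZMod.card]

lemma cardRootsOfUnityReGE_zero : cardRootsOfUnityReGE m 0 = 2 * (m / 4) + 1 := by
  simp only [cardRootsOfUnityReGE, re_stdAddChar_nonneg_iff, card_four_mul_natAbs_valMinAbs_le]

lemma cardRootsOfUnityReGE_one : cardRootsOfUnityReGE m 1 = 1 := by
  simp [cardRootsOfUnityReGE, one_le_re_stdAddChar_iff, Finset.filter_eq']

lemma cardRootsOfUnityReGE_of_one_lt {t : ℝ} (ht : 1 < t) : cardRootsOfUnityReGE m t = 0 :=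
  Finset.card_eq_zero.2 <| Finset.filter_false_of_mem fun j _ =>
    not_le.2 ((le_of_abs_le (abs_re_addChar_le_one _ j)).trans_lt ht)

end RootsOfUnity

section Dimension

variable {N m : ℕ} [NeZero m]

lemma finrank_PWprod_eq_sum_choose (Ω : ℝ) :
    Module.finrank ℂ (PWprod N m Ω) =
      ∑ κ ∈ Finset.range (N + 1), N.choose κ * cardRootsOfUnityReGE m (κ + 1 - Ω / 2) := by
  have hcond : ∀ k x : ℝ, 2 * k + (2 - 2 * x) ≤ Ω ↔ k + 1 - Ω / 2 ≤ x := fun k x => by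
    constructor <;> intro h <;> linarith
  have hslice : ∀ S : Finset (Fin N),
      (∑ j : ZMod m, if (#S : ℝ) + 1 - Ω / 2 ≤ (ZMod.stdAddChar j).re then 1 else 0) =
        cardRootsOfUnityReGE m (#S + 1 - Ω / 2) := fun S => (Finset.card_filter _ _).symm
  have hsum := Finset.sum_powerset_apply_card
    (fun κ : ℕ => cardRootsOfUnityReGE m (κ + 1 - Ω / 2)) (x := (Finset.univ : Finset (Fin N)))
  rw [Finset.powerset_univ, Finset.card_fin] at hsum
  simp only [finrank_PWprod, hcond, Finset.card_filter, Fintype.sum_prod_type, hslice, hsum,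
    smul_eq_mul]

lemma sum_range_succ_choose_mul_eq_of_eq_zero {R : Type*} [Semiring R] (N : ℕ) {n : ℕ} {g : ℕ → R}
    (hg : ∀ k, n ≤ k → g k = 0) :
    ∑ k ∈ Finset.range (N + 1), N.choose k * g k = ∑ k ∈ Finset.range n, N.choose k * g k := by
  refine Finset.sum_congr_of_eq_on_inter (fun k _ hk => ?_) (fun k _ hk => ?_) fun _ _ _ => rfl
  · rw [hg k (by simpa using hk), mul_zero]
  · rw [Nat.choose_eq_zero_of_lt (by simpa using hk), Nat.cast_zero, zero_mul]

end Dimension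

-- For `m ≤ 2` the operator `prodLap` is the Laplacian of a multigraph, with loops or double edges.
theorem stmt17_general (N m K : ℕ) [NeZero m] (hK : 1 ≤ K) :
    Module.finrank ℂ (PWprod N m (2 * (K : ℝ))) =
      m * ∑ κ ∈ Finset.range (K - 1), N.choose κ +
        (2 * (m / 4) + 1) * N.choose (K - 1) + N.choose K := by
  obtain ⟨L, rfl⟩ : ∃ L, K = L + 1 := ⟨K - 1, by omega⟩
  have hthreshold : ∀ κ : ℕ, (κ : ℝ) + 1 - 2 * (L + 1 : ℕ) / 2 = κ - L := fun κ => by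
    push_cast
    ring
  have hbelow : ∀ κ ∈ Finset.range L,
      N.choose κ * cardRootsOfUnityReGE m (κ - L) = m * N.choose κ := fun κ hκ => by
    have hκL : (κ : ℝ) + 1 ≤ L := by exact_mod_cast Finset.mem_range.1 hκ
    rw [cardRootsOfUnityReGE_of_le_neg_one (by linarith), mul_comm]
  have habove : ∀ κ : ℕ, L + 2 ≤ κ → cardRootsOfUnityReGE m (κ - L) = 0 := fun κ hκ => by
    have hLκ : (L : ℝ) + 2 ≤ κ := by exact_mod_cast hκ
    exact cardRootsOfUnityReGE_of_one_lt (by linarith)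
  have htrunc := sum_range_succ_choose_mul_eq_of_eq_zero N habove
  simp only [Nat.cast_id] at htrunc
  simp only [finrank_PWprod_eq_sum_choose, hthreshold]
  rw [htrunc, Finset.sum_range_succ, Finset.sum_range_succ, Finset.sum_congr rfl hbelow,
    ← Finset.mul_sum, sub_self, Nat.cast_succ, add_sub_cancel_left, cardRootsOfUnityReGE_zero,
    cardRootsOfUnityReGE_one, Nat.add_sub_cancel, mul_one, mul_comm (N.choose L)]

/-- for m = 4m'+1 and 3 ≤ K < N,
dim PW_{2K}(B_N □ C_m) = m·Σ_{κ=0}^{K−2} binom(N,κ)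
+ ((m+1)/2)·binom(N,K−1) + binom(N,K). -/
theorem stmt17 (N K m' : ℕ) (hm' : 1 ≤ m') (hK : 3 ≤ K) (hKN : K < N) :
    Module.finrank ℂ (PWprod N (4 * m' + 1) (2 * (K : ℝ))) =
      (4 * m' + 1) * ∑ κ ∈ Finset.range (K - 1), N.choose κ +
        ((4 * m' + 1 + 1) / 2) * N.choose (K - 1) + N.choose K := by
  rw [stmt17_general N (4 * m' + 1) K (by omega),
    show 2 * ((4 * m' + 1) / 4) + 1 = (4 * m' + 1 + 1) / 2 by omega]
end
end
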